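/- For every M > 0 there exists a two-bidder single-item auction instance with correlated values such that the supremum of revenue over Bayesian incentive compatible, ex post individually rational auctions is at least M times the supremum of revenue over dominant strategy incentive compatible, ex post individually rational auctions. -/

import Mathlib

open MeasureTheory Set

/-- The discrete measure placing mass `w i` at the point `a i`. -/
noncomputable def weightedDirac {ι α : Type*} [Fintype ι] [MeasurableSpace α]
    (w : ι → ℝ) (a : ι → α) : Measure α :=
  ∑ i, ENNReal.ofReal (w i) • Measure.dirac (a i)

theorem isProbabilityMeasure_weightedDirac {ι α : Type*} [Fintype ι] [MeasurableSpace α]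
    {w : ι → ℝ} (hw : ∀ i, 0 ≤ w i) (hsum : ∑ i, w i = 1) (a : ι → α) :
    IsProbabilityMeasure (weightedDirac w a) := by
  refine ⟨?_⟩
  simp only [weightedDirac, Measure.coe_finsetSum, Finset.sum_apply, Measure.smul_apply,
    measure_univ, smul_eq_mul, mul_one]
  rw [← ENNReal.ofReal_sum_of_nonneg fun i _ => hw i, hsum, ENNReal.ofReal_one]

theorem ae_weightedDirac {ι α : Type*} [Fintype ι] [MeasurableSpace α]
    [MeasurableSingletonClass α] (w : ι → ℝ) {a : ι → α} {P : α → Prop} (h : ∀ i, P (a i)) :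
    ∀ᵐ t ∂weightedDirac w a, P t := by
  rw [ae_iff]
  simp only [weightedDirac, Measure.coe_finsetSum, Finset.sum_apply, Measure.smul_apply]
  refine Finset.sum_eq_zero fun i _ => ?_
  simp [Measure.dirac_apply, h i]

theorem integral_weightedDirac {ι α : Type*} [Fintype ι] [MeasurableSpace α]
    [MeasurableSingletonClass α] {w : ι → ℝ} (hw : ∀ i, 0 ≤ w i) (a : ι → α) (f : α → ℝ) :
    ∫ t, f t ∂weightedDirac w a = ∑ i, w i * f (a i) := by
  unfold weightedDirac
  rw [integral_finsetSum_measure fun i _ =>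
    (integrable_dirac (by simp)).smul_measure ENNReal.ofReal_ne_top]
  refine Finset.sum_congr rfl fun i _ => ?_
  rw [integral_smul_measure, integral_dirac, ENNReal.toReal_ofReal (hw i), smul_eq_mul]

/-- Exactly half of a family of finsets invariant under toggling `k` contains `k`. -/
theorem two_mul_card_filter_mem {α : Type*} [Fintype α] [DecidableEq α] (k : α)
    (P : Finset α → Prop) [DecidablePred P] (hP : ∀ s, P (symmDiff s {k}) ↔ P s) :
    2 * (Finset.univ.filter fun s => P s ∧ k ∈ s).card = (Finset.univ.filter P).card := by
  have hswap : (Finset.univ.filter fun s => P s ∧ k ∈ s).card =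
      (Finset.univ.filter fun s => P s ∧ k ∉ s).card := by
    refine Finset.card_bij' (fun s _ => symmDiff s {k}) (fun s _ => symmDiff s {k}) ?_ ?_ ?_ ?_
    · intro s hs
      simp only [Finset.mem_filter, Finset.mem_univ, true_and] at hs ⊢
      exact ⟨(hP s).2 hs.1, by simp [Finset.mem_symmDiff, hs.2]⟩
    · intro s hs
      simp only [Finset.mem_filter, Finset.mem_univ, true_and] at hs ⊢
      exact ⟨(hP s).2 hs.1, by simp [Finset.mem_symmDiff, hs.2]⟩
    · intro s _
      exact symmDiff_symmDiff_cancel_right _ _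
    · intro s _
      exact symmDiff_symmDiff_cancel_right _ _
  have hsplit := Finset.card_filter_add_card_filter_not (s := Finset.univ.filter P)
    (fun s => k ∈ s)
  rw [Finset.filter_filter, Finset.filter_filter] at hsplit
  omega

theorem card_filter_mem_fin (m : ℕ) (k : Fin (m + 1)) :
    (Finset.univ.filter fun s : Finset (Fin (m + 1)) => k ∈ s).card = 2 ^ m := by
  have h := two_mul_card_filter_mem k (fun _ => True) (fun _ => Iff.rfl)
  simp only [true_and, Finset.filter_true, Finset.card_univ, Fintype.card_finset,
    Fintype.card_fin, pow_succ] at h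
  omega

theorem two_mul_card_filter_mem_mem_fin (m : ℕ) {k k' : Fin (m + 1)} (hk : k ≠ k') :
    2 * (Finset.univ.filter fun s : Finset (Fin (m + 1)) => k ∈ s ∧ k' ∈ s).card = 2 ^ m := by
  rw [two_mul_card_filter_mem k' (fun s => k ∈ s) fun s => by simp [Finset.mem_symmDiff, hk],
    card_filter_mem_fin]

/-- A truthful, individually rational single-agent mechanism earns at most `2` in total when
each value `2 ^ k` has weight `2 ^ (-k)`, whichever of these values are present. -/
theorem sum_geometric_payment_le_two (m : ℕ) (s : Finset (Fin (m + 1))) (y q : ℝ → ℝ)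
    (hy : ∀ v, 0 ≤ v → 0 ≤ y v ∧ y v ≤ 1) (hir : ∀ v, 0 ≤ v → 0 ≤ v * y v - q v)
    (hic : ∀ v, 0 ≤ v → ∀ v', 0 ≤ v' → v * y v' - q v' ≤ v * y v - q v) :
    ∑ k : Fin (m + 1), (if k ∈ s then (1 / 2 : ℝ) ^ (k : ℕ) * q (2 ^ (k : ℕ)) else 0) ≤ 2 := by
  set Y : ℕ → ℝ := fun k => y (2 ^ k) with hY
  set Q : ℕ → ℝ := fun k => q (2 ^ k) + (y 1 - q 1) with hQ
  have hpos : ∀ k : ℕ, (0 : ℝ) < 2 ^ k := fun k => by positivity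
  have hup : ∀ k, Q (k + 1) - Q k ≤ 2 ^ (k + 1) * (Y (k + 1) - Y k) := fun k => by
    have := hic (2 ^ (k + 1)) (hpos _).le (2 ^ k) (hpos _).le
    simp only [hQ, hY]
    linarith
  have hlow : ∀ k, 2 ^ k * (Y (k + 1) - Y k) ≤ Q (k + 1) - Q k := fun k => by
    have := hic (2 ^ k) (hpos _).le (2 ^ (k + 1)) (hpos _).le
    simp only [hQ, hY]
    linarith
  have hQstep : ∀ k, Q k ≤ Q (k + 1) := fun k => by
    have h1 := hup k
    have h2 := hlow k
    rw [pow_succ] at h1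
    nlinarith
  have hQ0 : Q 0 = Y 0 := by simp [hQ, hY]
  have hQnonneg : ∀ k, 0 ≤ Q k := fun k => by
    have h0 : 0 ≤ Q 0 := by rw [hQ0]; exact (hy _ (hpos 0).le).1
    exact h0.trans (monotone_nat_of_le_succ hQstep (Nat.zero_le k))
  have hqQ : ∀ k : ℕ, q (2 ^ k) ≤ Q k := fun k => by
    have := hir 1 zero_le_one
    simp only [hQ]
    linarith
  have hpot : ∀ n : ℕ, ∑ k ∈ Finset.range (n + 1), (1 / 2 : ℝ) ^ k * Q k ≤
      2 * Y n - (1 / 2) ^ n * Q n := by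
    intro n
    induction n with
    | zero => simp [hQ0]; linarith
    | succ n ih =>
      rw [Finset.sum_range_succ]
      have h := mul_le_mul_of_nonneg_left (hup n) (by positivity : (0 : ℝ) ≤ (1 / 2) ^ n)
      have hcancel : (1 / 2 : ℝ) ^ n * 2 ^ n = 1 := by rw [← mul_pow]; norm_num
      have hrw : (1 / 2 : ℝ) ^ n * (2 ^ (n + 1) * (Y (n + 1) - Y n)) =
          2 * (Y (n + 1) - Y n) := by
        rw [pow_succ]
        linear_combination (2 * (Y (n + 1) - Y n)) * hcancel
      rw [hrw] at h
      rw [pow_succ]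
      linarith
  calc ∑ k : Fin (m + 1), (if k ∈ s then (1 / 2 : ℝ) ^ (k : ℕ) * q (2 ^ (k : ℕ)) else 0)
      ≤ ∑ k : Fin (m + 1), (1 / 2 : ℝ) ^ (k : ℕ) * Q k := by
        refine Finset.sum_le_sum fun k _ => ?_
        split_ifs
        · exact mul_le_mul_of_nonneg_left (hqQ k) (by positivity)
        · exact mul_nonneg (by positivity) (hQnonneg k)
    _ = ∑ k ∈ Finset.range (m + 1), (1 / 2 : ℝ) ^ k * Q k :=
        Fin.sum_univ_eq_sum_range (fun k => (1 / 2 : ℝ) ^ k * Q k) (m + 1)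
    _ ≤ 2 * Y m - (1 / 2) ^ m * Q m := hpot m
    _ ≤ 2 := by
        have h1 := (hy _ (hpos m).le).2
        have h2 := mul_nonneg (by positivity : (0 : ℝ) ≤ (1 / 2) ^ m) (hQnonneg m)
        simp only [hY]
        linarith

theorem exists_injective_unitInterval (α : Type*) [Finite α] :
    ∃ c : α → ℝ, Function.Injective c ∧ ∀ a, 0 ≤ c a ∧ c a ≤ 1 := by
  obtain ⟨n, ⟨e⟩⟩ := Finite.exists_equiv_fin α
  refine ⟨fun a => 1 / ((e a : ℕ) + 1 : ℝ), fun a b hab => ?_, fun a => ⟨by positivity, ?_⟩⟩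
  · have h : ((e a : ℕ) : ℝ) = (e b : ℕ) := by
      have h' := one_div_one_div ((e a : ℕ) + 1 : ℝ)
      rw [show 1 / ((e a : ℕ) + 1 : ℝ) = 1 / ((e b : ℕ) + 1 : ℝ) from hab, one_div_one_div] at h'
      linarith
    exact e.injective (Fin.ext (by exact_mod_cast h))
  · rw [div_le_one (by positivity)]
    linarith [(Nat.cast_nonneg (e a : ℕ) : (0 : ℝ) ≤ _)]

/-- Misreporting a value `2 ^ k` does not pay when a report `r` wins (`X s = 1`) exactly if
`r = 2 ^ k'` with `k' ∈ s`, at price `r / 2`, and `s` is a uniform set containing `k`. -/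
theorem sum_misreport_utility_le (m : ℕ) (k : Fin (m + 1)) (r : ℝ) (X : Finset (Fin (m + 1)) → ℝ)
    (hX : ∀ k' : Fin (m + 1), r = 2 ^ (k' : ℕ) → ∀ s, X s = if k' ∈ s then 1 else 0)
    (hX0 : (∀ k' : Fin (m + 1), r ≠ 2 ^ (k' : ℕ)) → ∀ s, X s = 0) :
    ∑ s, (if k ∈ s then (2 : ℝ) ^ (k : ℕ) * X s - r / 2 * X s else 0) ≤
      2 ^ m * (2 ^ (k : ℕ) / 2) := by
  by_cases hr : ∃ k' : Fin (m + 1), r = 2 ^ (k' : ℕ)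
  · obtain ⟨k', hk'⟩ := hr
    by_cases hkk : k = k'
    · subst hkk
      have hterm : ∀ s : Finset (Fin (m + 1)),
          (if k ∈ s then (2 : ℝ) ^ (k : ℕ) * X s - r / 2 * X s else 0) =
            if k ∈ s then 2 ^ (k : ℕ) / 2 else 0 := fun s => by
        split_ifs with h
        · rw [hX k hk' s, if_pos h, hk']
          ring
        · rfl
      rw [Finset.sum_congr rfl fun s _ => hterm s, ← Finset.sum_filter, Finset.sum_const,
        card_filter_mem_fin, nsmul_eq_mul]
      push_cast
      exact le_rfl
    · have hcard : (2 : ℝ) * ((Finset.univ.filter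
          fun s : Finset (Fin (m + 1)) => k ∈ s ∧ k' ∈ s).card : ℝ) = 2 ^ m := by
        exact_mod_cast two_mul_card_filter_mem_mem_fin m hkk
      calc ∑ s, (if k ∈ s then (2 : ℝ) ^ (k : ℕ) * X s - r / 2 * X s else 0)
          ≤ ∑ s : Finset (Fin (m + 1)), (if k ∈ s ∧ k' ∈ s then (2 : ℝ) ^ (k : ℕ) else 0) := by
            refine Finset.sum_le_sum fun s _ => ?_
            have hr0 : 0 ≤ r / 2 := by rw [hk']; positivity
            rw [hX k' hk' s]
            by_cases h : k ∈ s <;> by_cases h' : k' ∈ s <;> simp [h, h', hr0]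
        _ = 2 ^ m * (2 ^ (k : ℕ) / 2) := by
            rw [← Finset.sum_filter, Finset.sum_const, nsmul_eq_mul, ← hcard]
            ring
  · push Not at hr
    have hzero : ∑ s, (if k ∈ s then (2 : ℝ) ^ (k : ℕ) * X s - r / 2 * X s else 0) = 0 :=
      Finset.sum_eq_zero fun s _ => by simp [hX0 hr s]
    rw [hzero]
    positivity

/-- **Unbounded gap between BIC and DSIC revenue in correlated two-bidder auctions.**
For every `M > 0` there exists a two-bidder single-item auction instance with correlated
values — a joint distribution `D` on type pairs in `ℝ_{≥0} × ℝ_{≥0}` — such that the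
supremum of revenue over Bayesian incentive compatible, ex post individually rational
auctions is at least `M` times the supremum of revenue over dominant strategy incentive
compatible, ex post individually rational auctions.  (This is expressed by exhibiting one
BIC, ex post IR auction whose revenue is at least `M` times the revenue of every DSIC,
ex post IR auction.) -/
theorem exists_correlated_instance_bic_revenue_ge_mul_dsic (M : ℝ) (hM : 0 < M) :
    ∃ D : Measure (ℝ × ℝ), IsProbabilityMeasure D ∧
      (∀ᵐ t ∂D, 0 ≤ t.1 ∧ 0 ≤ t.2) ∧
      ∃ x₁ x₂ p₁ p₂ : ℝ × ℝ → ℝ,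
        Measurable x₁ ∧ Measurable x₂ ∧ Measurable p₁ ∧ Measurable p₂ ∧
        -- feasibility
        (∀ t : ℝ × ℝ, 0 ≤ t.1 → 0 ≤ t.2 →
          0 ≤ x₁ t ∧ 0 ≤ x₂ t ∧ x₁ t + x₂ t ≤ 1) ∧
        -- ex post individual rationality
        (∀ t : ℝ × ℝ, 0 ≤ t.1 → 0 ≤ t.2 →
          0 ≤ t.1 * x₁ t - p₁ t ∧ 0 ≤ t.2 * x₂ t - p₂ t) ∧
        -- Bayesian incentive compatibility, expressed via deviation strategies:
        -- no measurable misreporting strategy of either bidder is profitable in expectation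
        (∀ σ : ℝ → ℝ, Measurable σ → (∀ v, 0 ≤ σ v) →
          (∫ t, (t.1 * x₁ (σ t.1, t.2) - p₁ (σ t.1, t.2)) ∂D) ≤
            ∫ t, (t.1 * x₁ t - p₁ t) ∂D) ∧
        (∀ σ : ℝ → ℝ, Measurable σ → (∀ v, 0 ≤ σ v) →
          (∫ t, (t.2 * x₂ (t.1, σ t.2) - p₂ (t.1, σ t.2)) ∂D) ≤
            ∫ t, (t.2 * x₂ t - p₂ t) ∂D) ∧
        -- the revenue of this BIC auction is at least M times that of every DSIC auction
        ∀ y₁ y₂ q₁ q₂ : ℝ × ℝ → ℝ,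
          Measurable y₁ → Measurable y₂ → Measurable q₁ → Measurable q₂ →
          -- feasibility
          (∀ t : ℝ × ℝ, 0 ≤ t.1 → 0 ≤ t.2 →
            0 ≤ y₁ t ∧ 0 ≤ y₂ t ∧ y₁ t + y₂ t ≤ 1) →
          -- ex post individual rationality
          (∀ t : ℝ × ℝ, 0 ≤ t.1 → 0 ≤ t.2 →
            0 ≤ t.1 * y₁ t - q₁ t ∧ 0 ≤ t.2 * y₂ t - q₂ t) →
          -- dominant strategy incentive compatibility
          (∀ t : ℝ × ℝ, 0 ≤ t.1 → 0 ≤ t.2 → ∀ v' : ℝ, 0 ≤ v' →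
            t.1 * y₁ (v', t.2) - q₁ (v', t.2) ≤ t.1 * y₁ t - q₁ t) →
          (∀ t : ℝ × ℝ, 0 ≤ t.1 → 0 ≤ t.2 → ∀ v' : ℝ, 0 ≤ v' →
            t.2 * y₂ (t.1, v') - q₂ (t.1, v') ≤ t.2 * y₂ t - q₂ t) →
          M * ∫ t, (q₁ t + q₂ t) ∂D ≤ ∫ t, (p₁ t + p₂ t) ∂D := by
  classical
  obtain ⟨m, hm⟩ := exists_nat_ge (12 * M)
  obtain ⟨c, hcinj, hc⟩ := exists_injective_unitInterval (Finset (Fin (m + 1)))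
  set Z : ℝ := (∑ k : Fin (m + 1), (1 / 2 : ℝ) ^ (k : ℕ)) * 2 ^ m with hZ
  have hZpos : 0 < Z := mul_pos
    (Finset.sum_pos (fun _ _ => by positivity) Finset.univ_nonempty) (by positivity)
  have hZle : Z ≤ 2 * 2 ^ m := by
    refine mul_le_mul_of_nonneg_right ?_ (by positivity)
    rw [Fin.sum_univ_eq_sum_range (fun k => (1 / 2 : ℝ) ^ k)]
    exact sum_geometric_two_le _
  set w : Fin (m + 1) × Finset (Fin (m + 1)) → ℝ :=
    fun i => if i.1 ∈ i.2 then (1 / 2 : ℝ) ^ (i.1 : ℕ) / Z else 0 with hw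
  have hw0 : ∀ i, 0 ≤ w i := fun i => by
    simp only [hw]
    split_ifs <;> positivity
  set a : Fin (m + 1) × Finset (Fin (m + 1)) → ℝ × ℝ :=
    fun i => ((2 : ℝ) ^ (i.1 : ℕ), c i.2) with ha
  have ha0 : ∀ i, 0 ≤ (a i).1 ∧ 0 ≤ (a i).2 := fun i => ⟨by positivity, (hc _).1⟩
  have hwsum : ∑ i, w i = 1 := by
    rw [Fintype.sum_prod_type]
    simp only [hw, ← Finset.sum_filter, Finset.sum_const, card_filter_mem_fin, nsmul_eq_mul]
    rw [← Finset.mul_sum, ← Finset.sum_div, mul_div_assoc', div_eq_one_iff_eq hZpos.ne', hZ]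
    push_cast
    ring
  have hinjpow : ∀ k k' : Fin (m + 1), (2 : ℝ) ^ (k : ℕ) = 2 ^ (k' : ℕ) → k = k' :=
    fun k k' h => Fin.ext (pow_right_injective₀ (by norm_num) (by norm_num) h)
  set W : Set (ℝ × ℝ) := a '' {i | i.1 ∈ i.2} with hW
  have hWmeas : MeasurableSet W := (Set.toFinite _).measurableSet
  set x : ℝ × ℝ → ℝ := W.indicator 1 with hx
  have hxmeas : Measurable x := measurable_one.indicator hWmeas
  have hx01 : ∀ t, 0 ≤ x t ∧ x t ≤ 1 := fun t => by
    by_cases h : t ∈ W <;> simp [hx, h]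
  have hxmem : ∀ (k : Fin (m + 1)) s, x (2 ^ (k : ℕ), c s) = if k ∈ s then 1 else 0 := by
    intro k s
    have hiff : ((2 : ℝ) ^ (k : ℕ), c s) ∈ W ↔ k ∈ s := by
      refine ⟨?_, fun h => ⟨(k, s), h, rfl⟩⟩
      rintro ⟨⟨k', s'⟩, h, heq⟩
      obtain ⟨h1, h2⟩ := Prod.mk.inj heq
      rw [← hinjpow _ _ h1, ← hcinj h2]
      exact h
    simp [hx, Set.indicator_apply, hiff]
  have hxnot : ∀ r, (∀ k : Fin (m + 1), r ≠ 2 ^ (k : ℕ)) → ∀ s, x (r, c s) = 0 := by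
    intro r hr s
    refine Set.indicator_of_notMem ?_ _
    rintro ⟨⟨k, s'⟩, -, heq⟩
    exact hr k (Prod.mk.inj heq).1.symm
  refine ⟨weightedDirac w a, isProbabilityMeasure_weightedDirac hw0 hwsum a,
    ae_weightedDirac w ha0, x, 0, fun t => t.1 / 2 * x t, 0, hxmeas, measurable_const,
    (measurable_fst.div_const 2).mul hxmeas, measurable_const, ?_, ?_, ?_, ?_, ?_⟩
  · intro t _ _
    simpa using hx01 t
  · intro t h1 _
    refine ⟨?_, by simp⟩
    have := mul_nonneg h1 (hx01 t).1
    linarith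
  · intro σ _ _
    rw [integral_weightedDirac hw0, integral_weightedDirac hw0, Fintype.sum_prod_type,
      Fintype.sum_prod_type]
    refine Finset.sum_le_sum fun k _ => ?_
    have hfactor : ∀ F : Finset (Fin (m + 1)) → ℝ, ∑ s, w (k, s) * F s =
        (1 / 2 : ℝ) ^ (k : ℕ) / Z * ∑ s, if k ∈ s then F s else 0 := fun F => by
      rw [Finset.mul_sum]
      refine Finset.sum_congr rfl fun s _ => ?_
      by_cases h : k ∈ s <;> simp [hw, h]
    rw [hfactor, hfactor]
    refine mul_le_mul_of_nonneg_left ?_ (by positivity)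
    refine (sum_misreport_utility_le m k (σ (2 ^ (k : ℕ))) (fun s => x (σ (2 ^ (k : ℕ)), c s))
      (fun k' hk' s => by simp only [hk', hxmem]) (hxnot _)).trans (le_of_eq ?_)
    have hterm : ∀ s : Finset (Fin (m + 1)),
        (if k ∈ s then (a (k, s)).1 * x (a (k, s)) - (a (k, s)).1 / 2 * x (a (k, s)) else 0) =
          if k ∈ s then (2 : ℝ) ^ (k : ℕ) / 2 else 0 := fun s => by
      split_ifs with h
      · simp only [ha, hxmem, if_pos h]
        ring
      · rfl
    rw [Finset.sum_congr rfl fun s _ => hterm s, ← Finset.sum_filter, Finset.sum_const,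
      card_filter_mem_fin, nsmul_eq_mul]
    push_cast
    rfl
  · intro σ _ _
    simp
  · intro y₁ y₂ q₁ q₂ _ _ _ _ hfeas hir hic₁ _
    rw [integral_weightedDirac hw0, integral_weightedDirac hw0]
    have hrev : ∑ i, w i * ((a i).1 / 2 * x (a i) + (0 : ℝ × ℝ → ℝ) (a i)) =
        (m + 1) * 2 ^ m / (2 * Z) := by
      have hterm : ∀ (k : Fin (m + 1)) (s : Finset (Fin (m + 1))),
          w (k, s) * ((a (k, s)).1 / 2 * x (a (k, s)) + (0 : ℝ × ℝ → ℝ) (a (k, s))) =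
            if k ∈ s then 1 / (2 * Z) else 0 := fun k s => by
        by_cases h : k ∈ s
        · simp only [hw, ha, hxmem, if_pos h, Pi.zero_apply, mul_one, add_zero]
          have hcancel : (1 / 2 : ℝ) ^ (k : ℕ) * 2 ^ (k : ℕ) = 1 := by rw [← mul_pow]; norm_num
          rw [div_mul_div_comm, hcancel, mul_comm]
        · simp [hw, h]
      rw [Fintype.sum_prod_type]
      simp only [hterm, ← Finset.sum_filter, Finset.sum_const, card_filter_mem_fin, nsmul_eq_mul,
        Finset.card_univ, Fintype.card_fin]
      push_cast
      ring
    have hq₁ : ∑ i, w i * q₁ (a i) ≤ 4 * 2 ^ m / Z := by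
      rw [Fintype.sum_prod_type_right]
      calc ∑ s, ∑ k, w (k, s) * q₁ (a (k, s))
          ≤ ∑ _s : Finset (Fin (m + 1)), 2 / Z := by
            refine Finset.sum_le_sum fun s _ => ?_
            have h := sum_geometric_payment_le_two m s (fun v => y₁ (v, c s))
              (fun v => q₁ (v, c s))
              (fun v hv => by
                obtain ⟨h1, h2, h3⟩ := hfeas (v, c s) hv (hc s).1
                exact ⟨h1, by linarith⟩)
              (fun v hv => (hir (v, c s) hv (hc s).1).1)
              (fun v hv v' hv' => hic₁ (v, c s) hv (hc s).1 v' hv')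
            refine le_trans (le_of_eq ?_) (div_le_div_of_nonneg_right h hZpos.le)
            rw [Finset.sum_div]
            refine Finset.sum_congr rfl fun k _ => ?_
            by_cases h : k ∈ s
            · simp only [hw, ha, if_pos h]
              ring
            · simp [hw, h]
        _ = 4 * 2 ^ m / Z := by
            simp only [Finset.sum_const, Finset.card_univ, Fintype.card_finset, Fintype.card_fin,
              nsmul_eq_mul]
            push_cast
            ring
    have hq₂ : ∑ i, w i * q₂ (a i) ≤ 2 * 2 ^ m / Z := by
      calc ∑ i, w i * q₂ (a i) ≤ ∑ i, w i := by
            refine Finset.sum_le_sum fun i _ => mul_le_of_le_one_right (hw0 i) ?_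
            obtain ⟨h1, h2, h3⟩ := hfeas (a i) (ha0 i).1 (ha0 i).2
            have h4 := (hir (a i) (ha0 i).1 (ha0 i).2).2
            have h5 : (a i).2 * y₂ (a i) ≤ 1 :=
              mul_le_one₀ (hc i.2).2 h2 (by linarith)
            linarith
        _ = 1 := hwsum
        _ ≤ 2 * 2 ^ m / Z := by rwa [one_le_div hZpos]
    rw [hrev]
    simp only [mul_add, Finset.sum_add_distrib]
    calc M * ∑ i, w i * q₁ (a i) + M * ∑ i, w i * q₂ (a i)
        ≤ M * (4 * 2 ^ m / Z) + M * (2 * 2 ^ m / Z) := by gcongr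
      _ = 12 * M * 2 ^ m / (2 * Z) := by field_simp; ring
      _ ≤ (m + 1) * 2 ^ m / (2 * Z) := by
          gcongr
          linarith
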